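/- Let n ≥ 3 and let B ⊆ ℝ^n be a centrally symmetric convex body such that every closed convex subset of B is parkable in B. Then for every linear hyperplane H ⊆ ℝ^n there exists a one-dimensional linear subspace L ⊆ ℝ^n such that for every x ∈ ℝ^n with (H + x) ∩ B nonempty, the section (H + x) ∩ B has a center of symmetry lying on L. -/

import Mathlib

/-!
The body is the unit ball of a norm. Parking the sections of ever larger balls by the translates of
a plane `G` yields, in every translate of `G`, a vector to which `G` is Birkhoff orthogonal. At a
point `p` where the norm is differentiable, such vectors fix the logarithmic derivative of the gauge
of a section of the ball parallel to the tangent hyperplane at `p`, along any line in that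
hyperplane. This logarithmic derivative does not depend on the height of the section, so all these
sections are homothetic to the central one and hence centred on the line `ℝ p`. In other words the
ball is invariant under a skew reflection with axis `ℝ p`.

Such reflections are unique and form a closed set, and smooth points are dense, so every `p ≠ 0` is
the axis of one, depending continuously on `p`. Continuity makes the norm smooth, so the mirror of
the reflection at `p` is parallel to any hyperplane supporting the ball there. Every hyperplane is
parallel to a supporting one.
-/

open Set Filter Topology Metric Module

section Subgradient

variable {y z g m : ℝ → ℝ}

lemma monotone_of_subgradient (h : ∀ a b, y a + (b - a) * g a ≤ y b) : Monotone g := by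
  intro a b hab
  rcases hab.eq_or_lt with rfl | hlt
  · exact le_rfl
  · refine le_of_mul_le_mul_left ?_ (sub_pos.2 hlt)
    linarith [h a b, h b a]

lemma hasDerivAt_of_subgradient (h : ∀ a b, y a + (b - a) * g a ≤ y b) {a : ℝ}
    (hg : ContinuousAt g a) : HasDerivAt y (g a) a := by
  rw [hasDerivAt_iff_isLittleO, Asymptotics.isLittleO_iff]
  intro c hc
  filter_upwards [Metric.continuousAt_iff'.1 hg c hc] with b hb
  rw [Real.dist_eq] at hb
  have remainder_le : |y b - y a - (b - a) * g a| ≤ |(b - a) * (g b - g a)| :=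
    abs_le_abs_of_nonneg (by linarith [h a b]) (by linarith [h b a])
  calc ‖y b - y a - (b - a) • g a‖ ≤ |b - a| * |g b - g a| := by rwa [← abs_mul]
    _ ≤ c * ‖b - a‖ := by
      rw [Real.norm_eq_abs, mul_comm]
      exact mul_le_mul_of_nonneg_right hb.le (abs_nonneg _)

/- The subgradients are monotone, so off a countable set both functions are differentiable, with
the same logarithmic derivative `m`. -/
lemma div_eq_div_of_proportional_subgradients (hy : Continuous y) (hz : Continuous z)
    (hz_pos : ∀ a, 0 < z a) (hy_sub : ∀ a b, y a + (b - a) * (m a * y a) ≤ y b)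
    (hz_sub : ∀ a b, z a + (b - a) * (m a * z a) ≤ z b) (a b : ℝ) : y a / z a = y b / z b := by
  have integral_deriv := MeasureTheory.integral_eq_of_hasDerivAt_off_countable
    (fun x => y x / z x) (fun _ => (0 : ℝ)) (a := a) (b := b)
    ((monotone_of_subgradient hy_sub).countable_not_continuousAt.union
      (monotone_of_subgradient hz_sub).countable_not_continuousAt)
    (hy.div hz fun x => (hz_pos x).ne').continuousOn
    (by
      rintro x ⟨-, hx⟩
      simp only [mem_union, mem_ofPred_eq, not_or, not_not] at hx
      have numerator_eq_zero : m x * y x * z x - y x * (m x * z x) = 0 := by ring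
      simpa only [numerator_eq_zero, zero_div] using (hasDerivAt_of_subgradient hy_sub hx.1).fun_div
        (hasDerivAt_of_subgradient hz_sub hx.2) (hz_pos x).ne')
    (by simp)
  rw [intervalIntegral.integral_zero] at integral_deriv
  linarith

end Subgradient

section LinearAlgebra

variable {E : Type*} [AddCommGroup E] [Module ℝ E]

lemma gauge_le_gauge_of_smul_mem {D : Set E} (hD : Absorbent ℝ D) {x y : E}
    (h : ∀ s : ℝ, 0 < s → s • y ∈ D → s • x ∈ D) : gauge D x ≤ gauge D y := by
  obtain ⟨r, hr, hy⟩ := hD.gauge_set_nonempty (x := y)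
  rw [gauge_def', gauge_def']
  refine csInf_le_csInf ⟨0, fun s hs => hs.1.le⟩
    ⟨r, hr, (mem_smul_set_iff_inv_smul_mem₀ hr.ne' D y).1 hy⟩ ?_
  exact fun s hs => ⟨hs.1, h s⁻¹ (inv_pos.2 hs.1) hs.2⟩

lemma finrank_span_pair_eq_two {x y : E} (h : LinearIndependent ℝ ![x, y]) :
    finrank ℝ (Submodule.span ℝ {x, y}) = 2 := by
  rw [← Matrix.range_cons_cons_empty x y ![], finrank_span_eq_card h, Fintype.card_fin]

lemma exists_ker_eq_of_finrank_add_one_eq {H : Submodule ℝ E}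
    (hH : finrank ℝ H + 1 = finrank ℝ E) : ∃ f : E →ₗ[ℝ] ℝ, f ≠ 0 ∧ LinearMap.ker f = H := by
  have : FiniteDimensional ℝ E := .of_finrank_pos (by lia)
  have finrank_quotient : finrank ℝ (E ⧸ H) = finrank ℝ ℝ := by
    have := H.finrank_quotient_add_finrank
    rw [finrank_self]
    lia
  let e := LinearEquiv.ofFinrankEq (E ⧸ H) ℝ finrank_quotient
  have ker_eq : LinearMap.ker (e.toLinearMap ∘ₗ H.mkQ) = H := by
    rw [LinearEquiv.ker_comp, Submodule.ker_mkQ]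
  refine ⟨e.toLinearMap ∘ₗ H.mkQ, fun h => ?_, ker_eq⟩
  rw [← ker_eq, h, LinearMap.ker_zero, finrank_top] at hH
  lia

lemma exists_linearIndependent_pair_mem_ker (hdim : 3 ≤ finrank ℝ E) {f : E →ₗ[ℝ] ℝ} {x : E}
    (hx : f x = 0) (hx0 : x ≠ 0) : ∃ y, f y = 0 ∧ LinearIndependent ℝ ![x, y] := by
  have : FiniteDimensional ℝ E := .of_finrank_pos (by lia)
  have one_lt_finrank_ker : 1 < finrank ℝ (LinearMap.ker f) := by
    have range_le := (LinearMap.range f).finrank_le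
    have rank_nullity := f.finrank_range_add_finrank_ker
    rw [finrank_self] at range_le
    lia
  obtain ⟨y, hxy⟩ := exists_linearIndependent_pair_of_one_lt_finrank one_lt_finrank_ker
    (x := ⟨x, hx⟩) (Subtype.coe_ne_coe.1 hx0)
  refine ⟨y, y.2, ?_⟩
  simpa [LinearIndependent.pair_iff, Subtype.ext_iff] using hxy

end LinearAlgebra

section UnitBall

universe u

lemma exists_normedSpace_linearEquiv_norm_eq {V : Type u} [AddCommGroup V] [Module ℝ V]
    (p : Seminorm ℝ V) (hp : ∀ x, p x = 0 → x = 0) :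
    ∃ (F : Type u) (_ : NormedAddCommGroup F) (_ : NormedSpace ℝ F) (e : V ≃ₗ[ℝ] F),
      ∀ x, ‖e x‖ = p x := by
  let _ : Norm V := ⟨p⟩
  have core : NormedSpace.Core ℝ V :=
    { norm_nonneg := apply_nonneg p
      norm_smul := map_smul_eq_mul p
      norm_triangle := map_add_le_add p
      norm_eq_zero_iff := fun x => ⟨hp x, fun h => h ▸ map_zero p⟩ }
  let _ : NormedAddCommGroup V := .ofCore core
  exact ⟨V, inferInstance, .ofCore core, LinearEquiv.refl ℝ V, fun _ => rfl⟩

lemma exists_linearEquiv_image_eq_closedBall {V : Type u} [NormedAddCommGroup V] [NormedSpace ℝ V]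
    {B : Set V} (hcomp : IsCompact B) (hconv : Convex ℝ B) (hB : B ∈ 𝓝 0)
    (hsym : ∀ ⦃x⦄, x ∈ B → -x ∈ B) :
    ∃ (F : Type u) (_ : NormedAddCommGroup F) (_ : NormedSpace ℝ F) (e : V ≃ₗ[ℝ] F),
      e '' B = closedBall 0 1 := by
  have habs := absorbent_nhds_zero (𝕜 := ℝ) hB
  obtain ⟨F, _, _, e, he⟩ := exists_normedSpace_linearEquiv_norm_eq
    (gaugeSeminorm ((balanced_iff_neg_mem hconv).2 hsym) hconv habs)
    (fun x => (gauge_eq_zero habs ((NormedSpace.isVonNBounded_iff ℝ).2 hcomp.isBounded)).1)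
  refine ⟨F, _, _, e, Set.ext fun y => ?_⟩
  obtain ⟨x, rfl⟩ := e.surjective y
  rw [e.injective.mem_set_image, mem_closedBall_zero_iff, he]
  change x ∈ B ↔ gauge B x ≤ 1
  rw [gauge_le_one_iff_mem_closure hconv hB, hcomp.isClosed.closure_eq]

lemma zero_mem_interior_of_eq_neg {V : Type*} [NormedAddCommGroup V] [NormedSpace ℝ V] {B : Set V}
    (hconv : Convex ℝ B) (hsym : B = -B) (hint : (interior B).Nonempty) : 0 ∈ interior B := by
  obtain ⟨x, hx⟩ := hint
  have hnx : -x ∈ interior B := by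
    rwa [hsym, ← Set.image_neg_eq_neg, ← Homeomorph.coe_neg, ← Homeomorph.image_interior,
      Homeomorph.coe_neg, Set.image_neg_eq_neg, Set.neg_mem_neg]
  simpa using hconv.interior.midpoint_mem hx hnx

end UnitBall

section Parking

variable {E F : Type*} [AddCommGroup E] [AddCommGroup F]

/-- `C` is parkable in `B`: some translate of `C` contains the origin and lies in `B`. -/
def Parkable (C B : Set E) : Prop :=
  ∃ v : E, 0 ∈ (fun x => x + v) '' C ∧ (fun x => x + v) '' C ⊆ B

lemma parkable_iff {C B : Set E} : Parkable C B ↔ ∃ u ∈ C, ∀ x ∈ C, x - u ∈ B := by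
  constructor
  · rintro ⟨v, ⟨u, hu, huv⟩, hv⟩
    obtain rfl : v = -u := (neg_eq_of_add_eq_zero_right huv).symm
    exact ⟨u, hu, fun x hx => sub_eq_add_neg x u ▸ hv ⟨x, hx, rfl⟩⟩
  · rintro ⟨u, hu, h⟩
    refine ⟨-u, ⟨u, hu, add_neg_cancel u⟩, ?_⟩
    rintro _ ⟨x, hx, rfl⟩
    exact (sub_eq_add_neg x u).subst (motive := (· ∈ B)) (h x hx)

variable [Module ℝ E] [Module ℝ F]

/-- The section `(G + q) ∩ B` of `B` by the translate of the subspace `G` through `q`. -/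
def affineSection (B : Set E) (G : Submodule ℝ E) (q : E) : Set E :=
  (fun g => g + q) '' (G : Set E) ∩ B

/-- Every nonempty section of `B` by an affine plane is parkable in `B`. -/
def HasParkablePlaneSections (B : Set E) : Prop :=
  ∀ G : Submodule ℝ E, finrank ℝ G = 2 → ∀ q ∈ B, Parkable (affineSection B G q) B

/-- `p` is a center of symmetry of `C`. -/
def IsCenterOfSymmetry (p : E) (C : Set E) : Prop :=
  C = (fun y => (2 : ℝ) • p - y) '' C

lemma mem_affineSection {B : Set E} {G : Submodule ℝ E} {q x : E} :
    x ∈ affineSection B G q ↔ x - q ∈ G ∧ x ∈ B := by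
  simp [affineSection, ← sub_eq_add_neg]

lemma isCenterOfSymmetry_of_mapsTo {p : E} {C : Set E}
    (h : MapsTo (fun y => (2 : ℝ) • p - y) C C) : IsCenterOfSymmetry p C :=
  Subset.antisymm (fun y hy => ⟨_, h hy, sub_sub_cancel _ y⟩) h.image_subset

lemma HasParkablePlaneSections.image {B : Set E} (h : HasParkablePlaneSections B) (e : E ≃ₗ[ℝ] F) :
    HasParkablePlaneSections (e '' B) := by
  rintro G hG _ ⟨q, hq, rfl⟩
  have hG' : finrank ℝ (G.map e.symm.toLinearMap) = 2 := by
    rw [← hG]; exact e.symm.finrank_map_eq G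
  obtain ⟨u, hu, hpark⟩ := parkable_iff.1 (h _ hG' q hq)
  have mem_map_symm (x : E) : x ∈ G.map e.symm.toLinearMap ↔ e x ∈ G :=
    Submodule.mem_map_equiv G
  simp only [mem_affineSection, mem_map_symm, map_sub] at hu hpark
  refine parkable_iff.2 ⟨e u, mem_affineSection.2 ⟨hu.1, mem_image_of_mem e hu.2⟩, ?_⟩
  intro y hy
  obtain ⟨hyG, x, hx, rfl⟩ := mem_affineSection.1 hy
  exact ⟨x - u, hpark x ⟨hyG, hx⟩, map_sub e x u⟩

end Parking

section Birkhoff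

variable {E : Type*} [NormedAddCommGroup E] [NormedSpace ℝ E] {G : Submodule ℝ E} {c l p q u w : E}
  {r : ℝ}

/-- Birkhoff–James orthogonality of the subspace `G` to the vector `l`: moving along `l` does not
shorten the vectors of `G`. -/
def BirkhoffOrthogonal (G : Submodule ℝ E) (l : E) : Prop :=
  ∀ g ∈ G, ‖g‖ ≤ ‖g + l‖

namespace BirkhoffOrthogonal

lemma smul (h : BirkhoffOrthogonal G l) (s : ℝ) : BirkhoffOrthogonal G (s • l) := by
  intro g hg
  rcases eq_or_ne s 0 with rfl | hs
  · simp
  · calc ‖g‖ = ‖s‖ * ‖s⁻¹ • g‖ := by rw [← norm_smul, smul_inv_smul₀ hs]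
      _ ≤ ‖s‖ * ‖s⁻¹ • g + l‖ := by gcongr; exact h _ (G.smul_mem _ hg)
      _ = ‖g + s • l‖ := by rw [← norm_smul, smul_add, smul_inv_smul₀ hs]

lemma fderiv_norm_apply_eq_zero (h : BirkhoffOrthogonal G l) (hp : p ∈ G)
    (hd : DifferentiableAt ℝ (‖·‖) p) : fderiv ℝ (‖·‖) p l = 0 := by
  refine IsLocalMin.hasDerivAt_eq_zero (.of_forall fun t => ?_) (hd.hasFDerivAt.hasLineDerivAt l)
  simpa only [zero_smul, add_zero] using h.smul t p hp

lemma gauge_closedBall_le (h : BirkhoffOrthogonal G l) (hu : u ∈ G) (hw : w ∈ G) (hur : ‖u‖ < r) :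
    gauge (closedBall u r) w ≤ gauge (closedBall u r) (w + l) := by
  have hnhds : closedBall u r ∈ 𝓝 (0 : E) := closedBall_mem_nhds_of_mem (by simpa)
  refine gauge_le_gauge_of_smul_mem (absorbent_nhds_zero hnhds) fun s _ hmem => ?_
  rw [mem_closedBall_iff_norm] at hmem ⊢
  calc ‖s • w - u‖ ≤ ‖s • w - u + s • l‖ := h.smul s _ (G.sub_mem (G.smul_mem s hw) hu)
    _ = ‖s • (w + l) - u‖ := by rw [smul_add, sub_add_eq_add_sub]
    _ ≤ r := hmem

lemma gauge_closedBall_subgradient {m : ℝ} (h : BirkhoffOrthogonal G (c - m • w)) (hu : u ∈ G)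
    (hw : w ∈ G) (hur : ‖u‖ < r) (s : ℝ) :
    (1 + s * m) * gauge (closedBall u r) w ≤ gauge (closedBall u r) (w + s • c) := by
  rcases le_or_gt (1 + s * m) 0 with hs | hs
  · exact (mul_nonpos_of_nonpos_of_nonneg hs (gauge_nonneg _)).trans (gauge_nonneg _)
  · set a := 1 + s * m with ha
    have decomposition : w + s • c = a • (w + (s / a) • (c - m • w)) := by
      rw [smul_add, smul_smul, mul_div_cancel₀ s hs.ne', ha]
      module
    rw [decomposition, gauge_smul_of_nonneg hs.le, smul_eq_mul]
    exact mul_le_mul_of_nonneg_left ((h.smul _).gauge_closedBall_le hu hw hur) hs.le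

end BirkhoffOrthogonal

/-- The points of the translate `G + q` that can park the section of the ball of radius `r` by
`G + q`: moving such a point to the origin keeps this section inside the ball. -/
def parkingSpots (G : Submodule ℝ E) (q : E) (r : ℝ) : Set E :=
  {l | l - q ∈ G ∧ ∀ x, x - q ∈ G → ‖x‖ ≤ r → ‖x - l‖ ≤ r}

lemma isClosed_parkingSpots [FiniteDimensional ℝ E] : IsClosed (parkingSpots G q r) := by
  refine IsClosed.and (G.closed_of_finiteDimensional.preimage (continuous_sub_right q)) ?_
  simp only [ofPred_forall]
  refine isClosed_iInter fun x => isClosed_iInter fun _ => isClosed_iInter fun _ => ?_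
  exact isClosed_le (by fun_prop) (by fun_prop)

lemma isCompact_parkingSpots [FiniteDimensional ℝ E] (hqr : ‖q‖ ≤ r) :
    IsCompact (parkingSpots G q r) := by
  refine (isCompact_closedBall q r).of_isClosed_subset isClosed_parkingSpots fun l hl => ?_
  rw [mem_closedBall_iff_norm']
  exact hl.2 q (by simp) hqr

lemma antitone_parkingSpots : Antitone (parkingSpots G q) := by
  rintro r r' hr l ⟨hlq, hl⟩
  refine ⟨hlq, fun x hxq hx => ?_⟩
  set g := x - l with hg_def
  have hg : g ∈ G := by simpa [g] using G.sub_mem hxq hlq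
  rcases eq_or_ne g 0 with hg0 | hg0
  · rw [hg0, norm_zero]
    exact (norm_nonneg x).trans hx
  -- Lengthening `g` by `r' - r` turns the parking inequality for `r'` into the one for `r`.
  have hgn : 0 < ‖g‖ := norm_pos_iff.2 hg0
  have hδ : 0 ≤ (r' - r) / ‖g‖ := div_nonneg (sub_nonneg.2 hr) hgn.le
  have norm_stretch : ‖((r' - r) / ‖g‖) • g‖ = r' - r := by
    rw [norm_smul, Real.norm_of_nonneg hδ, div_mul_cancel₀ _ hgn.ne']
  have hpark := hl (x + ((r' - r) / ‖g‖) • g)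
    (by rw [add_sub_right_comm]; exact G.add_mem hxq (G.smul_mem _ hg))
    (by linarith [norm_add_le x (((r' - r) / ‖g‖) • g)])
  have stretched : x + ((r' - r) / ‖g‖) • g - l = (1 + (r' - r) / ‖g‖) • g := by
    rw [hg_def]
    module
  rw [stretched, norm_smul, Real.norm_of_nonneg (by linarith), add_mul, one_mul,
    div_mul_cancel₀ _ hgn.ne'] at hpark
  linarith

lemma HasParkablePlaneSections.nonempty_parkingSpots
    (h : HasParkablePlaneSections (closedBall (0 : E) 1)) (hG : finrank ℝ G = 2) (hr : 0 < r)
    (hqr : ‖q‖ ≤ r) : (parkingSpots G q r).Nonempty := by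
  have hball : LinearEquiv.smulOfNeZero ℝ E r hr.ne' '' closedBall 0 1 = closedBall 0 r := by
    change (r • ·) '' closedBall (0 : E) 1 = _
    rw [image_smul, smul_closedBall' hr.ne', smul_zero, mul_one, Real.norm_of_nonneg hr.le]
  have hpark := h.image (LinearEquiv.smulOfNeZero ℝ E r hr.ne')
  rw [hball] at hpark
  obtain ⟨l, hl, hlpark⟩ := parkable_iff.1 (hpark G hG q (mem_closedBall_zero_iff.2 hqr))
  simp only [mem_affineSection, mem_closedBall_zero_iff] at hl hlpark
  exact ⟨l, hl.1, fun x hxq hx => hlpark x ⟨hxq, hx⟩⟩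

lemma HasParkablePlaneSections.exists_birkhoffOrthogonal [FiniteDimensional ℝ E]
    (h : HasParkablePlaneSections (closedBall (0 : E) 1)) (hG : finrank ℝ G = 2) (q : E) :
    ∃ l, l - q ∈ G ∧ BirkhoffOrthogonal G l := by
  let R : ℕ → ℝ := fun n => ‖q‖ + (n + 1)
  have hqR (n : ℕ) : ‖q‖ ≤ R n := le_add_of_nonneg_right (by positivity)
  obtain ⟨l, hl⟩ := IsCompact.nonempty_iInter_of_sequence_nonempty_isCompact_isClosed
    (fun n => parkingSpots G q (R n))
    (fun n => antitone_parkingSpots (by simp only [R]; push_cast; linarith))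
    (fun n => h.nonempty_parkingSpots hG (by positivity) (hqR n))
    (isCompact_parkingSpots (hqR 0)) (fun n => isClosed_parkingSpots)
  have hl_all (r : ℝ) : l ∈ parkingSpots G q r := by
    obtain ⟨n, hn⟩ := exists_nat_ge r
    exact antitone_parkingSpots (by simp only [R]; linarith [norm_nonneg q]) (mem_iInter.1 hl n)
  refine ⟨l, (hl_all 0).1, fun g hg => ?_⟩
  simpa using (hl_all ‖g + l‖).2 (g + l)
    (by rw [add_sub_assoc]; exact G.add_mem hg (hl_all 0).1) le_rfl

lemma HasParkablePlaneSections.exists_birkhoffOrthogonal_sub_smul [FiniteDimensional ℝ E]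
    (h : HasParkablePlaneSections (closedBall (0 : E) 1)) (hp : p ≠ 0)
    (hd : DifferentiableAt ℝ (‖·‖) p) (hw : fderiv ℝ (‖·‖) p w = 0) (hw0 : w ≠ 0)
    (hc : fderiv ℝ (‖·‖) p c = 0) :
    ∃ m : ℝ, BirkhoffOrthogonal (Submodule.span ℝ {p, w}) (c - m • w) := by
  have hpw : LinearIndependent ℝ ![p, w] := by
    refine LinearIndependent.pair_iff.2 fun s t hst => ?_
    have hs : s = 0 := by
      simpa [hd.fderiv_norm_self, hw, hp] using congrArg (fderiv ℝ (‖·‖) p) hst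
    exact ⟨hs, by simpa [hs, hw0] using hst⟩
  obtain ⟨l, hlc, hl⟩ := h.exists_birkhoffOrthogonal (finrank_span_pair_eq_two hpw) c
  obtain ⟨s, t, hst⟩ := Submodule.mem_span_pair.1 hlc
  have hl_apply := hl.fderiv_norm_apply_eq_zero (Submodule.subset_span (mem_insert p {w})) hd
  have hs : s = 0 := by
    simpa [hl_apply, hc, hd.fderiv_norm_self, hw, hp] using congrArg (fderiv ℝ (‖·‖) p) hst
  refine ⟨-t, ?_⟩
  convert hl using 1
  rw [← sub_add_cancel l c, ← hst, hs]
  module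

end Birkhoff

section SymmetryAxis

variable {E : Type*} [NormedAddCommGroup E] [NormedSpace ℝ E] {p u c x y : E} {r : ℝ}
  {f φ ψ : E →L[ℝ] ℝ}

/-- The skew reflection `x ↦ 2 φ(x) p - x` with axis `ℝ p` and mirror parallel to `ker φ` preserves
the unit ball. It is an involution, so it is enough that it does not increase the norm. -/
structure IsSymmetryAxis (p : E) (φ : E →L[ℝ] ℝ) : Prop where
  apply_self : φ p = 1
  norm_reflect_le (x : E) : ‖(2 * φ x) • p - x‖ ≤ ‖x‖

lemma HasParkablePlaneSections.gauge_div_gauge_eq [FiniteDimensional ℝ E]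
    (h : HasParkablePlaneSections (closedBall (0 : E) 1)) (hp : p ≠ 0)
    (hd : DifferentiableAt ℝ (‖·‖) p) (hx : fderiv ℝ (‖·‖) p x = 0)
    (hy : fderiv ℝ (‖·‖) p y = 0) (hxy : LinearIndependent ℝ ![x, y])
    (hu : u ∈ Submodule.span ℝ {p}) (hur : ‖u‖ < r) :
    gauge (closedBall u r) x / gauge (closedBall 0 r) x =
      gauge (closedBall u r) y / gauge (closedBall 0 r) y := by
  let w (a : ℝ) : E := x + a • (y - x)
  have hw0 (a : ℝ) : w a ≠ 0 := fun hwa => by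
    have := LinearIndependent.pair_iff.1 hxy (1 - a) a (by rw [← hwa]; module)
    linarith [this.1, this.2]
  choose m hm using fun a => h.exists_birkhoffOrthogonal_sub_smul hp hd (w := w a) (c := y - x)
    (by simp [w, hx, hy]) (hw0 a) (by simp [hx, hy])
  have span_le (a : ℝ) : Submodule.span ℝ {p} ≤ Submodule.span ℝ {p, w a} :=
    Submodule.span_mono (by simp)
  have subgradient {v : E} (hv : v ∈ Submodule.span ℝ {p}) (hvr : ‖v‖ < r) (a b : ℝ) :
      gauge (closedBall v r) (w a) + (b - a) * (m a * gauge (closedBall v r) (w a)) ≤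
        gauge (closedBall v r) (w b) := by
    have hwb : w b = w a + (b - a) • (y - x) := by simp only [w]; module
    rw [hwb, ← mul_assoc, ← one_add_mul]
    exact (hm a).gauge_closedBall_subgradient (span_le a hv)
      (Submodule.subset_span (by simp)) hvr (b - a)
  have hnhds {v : E} (hvr : ‖v‖ < r) : closedBall v r ∈ 𝓝 (0 : E) :=
    closedBall_mem_nhds_of_mem (by simpa)
  have continuous_gauge_line {v : E} (hvr : ‖v‖ < r) :
      Continuous fun a => gauge (closedBall v r) (w a) :=
    (continuous_gauge (convex_closedBall v r) (hnhds hvr)).comp (by fun_prop)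
  have h0r : ‖(0 : E)‖ < r := norm_zero.trans_lt ((norm_nonneg u).trans_lt hur)
  simpa [w] using div_eq_div_of_proportional_subgradients (continuous_gauge_line hur)
    (continuous_gauge_line h0r)
    (fun a => (gauge_pos (absorbent_nhds_zero (hnhds h0r))
      ((NormedSpace.isVonNBounded_iff ℝ).2 isBounded_closedBall)).2 (hw0 a))
    (subgradient hu hur) (subgradient (Submodule.zero_mem _) h0r) 0 1

/- In dimension at least three the tangent hyperplane contains a vector independent of both `c` and
`-c`, through which the two can be compared. -/
lemma HasParkablePlaneSections.gauge_closedBall_neg [FiniteDimensional ℝ E]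
    (h : HasParkablePlaneSections (closedBall (0 : E) 1)) (hdim : 3 ≤ finrank ℝ E) (hp : p ≠ 0)
    (hd : DifferentiableAt ℝ (‖·‖) p) (hc : fderiv ℝ (‖·‖) p c = 0)
    (hu : u ∈ Submodule.span ℝ {p}) (hur : ‖u‖ < r) :
    gauge (closedBall u r) (-c) = gauge (closedBall u r) c := by
  rcases eq_or_ne c 0 with rfl | hc0
  · rw [neg_zero]
  obtain ⟨a, ha, hca⟩ := exists_linearIndependent_pair_mem_ker hdim
    (f := (fderiv ℝ (‖·‖) p).toLinearMap) hc hc0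
  have ratio_eq := h.gauge_div_gauge_eq hp hd hc ha hca hu hur
  have ratio_neg_eq := h.gauge_div_gauge_eq hp hd (x := -c) (by rw [map_neg, hc, neg_zero]) ha
    (LinearIndependent.pair_neg_left_iff.2 hca) hu hur
  have gauge_ne_zero : gauge (closedBall 0 r) c ≠ 0 :=
    ((gauge_pos (absorbent_nhds_zero (closedBall_mem_nhds 0 ((norm_nonneg u).trans_lt hur)))
      ((NormedSpace.isVonNBounded_iff ℝ).2 isBounded_closedBall)).2 hc0).ne'
  have gauge_neg_center : gauge (closedBall 0 r) (-c) = gauge (closedBall 0 r) c :=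
    gauge_neg (fun x hx => by simpa using hx) c
  rw [gauge_neg_center, ← ratio_eq] at ratio_neg_eq
  exact (div_left_inj' gauge_ne_zero).1 ratio_neg_eq

lemma HasParkablePlaneSections.isSymmetryAxis_fderiv_norm [FiniteDimensional ℝ E]
    (h : HasParkablePlaneSections (closedBall (0 : E) 1)) (hdim : 3 ≤ finrank ℝ E) (hp : p ≠ 0)
    (hd : DifferentiableAt ℝ (‖·‖) p) : IsSymmetryAxis p (‖p‖⁻¹ • fderiv ℝ (‖·‖) p) := by
  have hpn : ‖p‖ ≠ 0 := norm_ne_zero_iff.2 hp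
  set φ := ‖p‖⁻¹ • fderiv ℝ (‖·‖) p with hφ
  have apply_self : φ p = 1 := by simp [hφ, hd.fderiv_norm_self, hpn]
  refine ⟨apply_self, fun x => le_of_forall_gt_imp_ge_of_dense fun r hxr => ?_⟩
  set u := -(φ x • p)
  have hur : ‖u‖ < r := by
    have fderiv_le : ‖fderiv ℝ (‖·‖) p x‖ ≤ ‖x‖ := by
      simpa using (fderiv ℝ (‖·‖) p).le_of_opNorm_le
        (norm_fderiv_le_of_lipschitz ℝ lipschitzWith_one_norm) x
    calc ‖u‖ = ‖fderiv ℝ (‖·‖) p x‖ := by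
          simp only [u, hφ, norm_neg, norm_smul, smul_apply, norm_inv, norm_norm]
          field_simp
      _ < r := fderiv_le.trans_lt hxr
  have gauge_le_one_iff (z : E) : gauge (closedBall u r) z ≤ 1 ↔ ‖z - u‖ ≤ r := by
    rw [gauge_le_one_iff_mem_closure (convex_closedBall u r)
      (closedBall_mem_nhds_of_mem (by simpa using hur)), isClosed_closedBall.closure_eq,
      mem_closedBall_iff_norm]
  have hc : fderiv ℝ (‖·‖) p (x + u) = 0 := by
    have : φ (x + u) = 0 := by simp [u, apply_self]
    simpa [hφ, hpn] using this
  have hgauge := h.gauge_closedBall_neg hdim hp hd hc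
    (neg_mem (Submodule.smul_mem _ _ (Submodule.mem_span_singleton_self p))) hur
  have hx : gauge (closedBall u r) (x + u) ≤ 1 :=
    (gauge_le_one_iff _).2 (by rw [add_sub_cancel_right]; exact hxr.le)
  have reflect_eq : (2 * φ x) • p - x = -(x + u) - u := by simp only [u]; module
  rw [reflect_eq]
  exact (gauge_le_one_iff _).1 (hgauge.trans_le hx)

namespace IsSymmetryAxis

lemma ne_zero (h : IsSymmetryAxis p φ) : p ≠ 0 := by
  rintro rfl
  simpa using h.apply_self

lemma abs_apply_mul_norm_le (h : IsSymmetryAxis p φ) (x : E) : |φ x| * ‖p‖ ≤ ‖x‖ := by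
  refine le_of_mul_le_mul_left ?_ two_pos
  calc 2 * (|φ x| * ‖p‖) = ‖(2 * φ x) • p - x + x‖ := by
        rw [sub_add_cancel, norm_smul, Real.norm_eq_abs, abs_mul, abs_two, mul_assoc]
    _ ≤ ‖x‖ + ‖x‖ := (norm_add_le _ _).trans (by gcongr; exact h.norm_reflect_le x)
    _ = 2 * ‖x‖ := (two_mul _).symm

lemma norm_translate_le (hφ : IsSymmetryAxis p φ) (hψ : IsSymmetryAxis p ψ) (x : E) (n : ℕ) :
    ‖x + n • (2 * (φ x - ψ x)) • p‖ ≤ ‖x‖ := by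
  have composite_le (z : E) : ‖z + (2 * (φ z - ψ z)) • p‖ ≤ ‖z‖ := by
    have composite_eq : z + (2 * (φ z - ψ z)) • p =
        (2 * ψ ((2 * φ z) • p - z)) • p - ((2 * φ z) • p - z) := by
      simp only [map_sub, map_smul, hψ.apply_self, smul_eq_mul]
      module
    exact composite_eq ▸ (hψ.norm_reflect_le _).trans (hφ.norm_reflect_le z)
  induction n with
  | zero => simp
  | succ n ih =>
    refine le_trans (le_of_eq_of_le ?_ (composite_le _)) ih
    simp only [map_add, map_nsmul, map_smul, hφ.apply_self, hψ.apply_self]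
    congr 1
    module

lemma unique (hφ : IsSymmetryAxis p φ) (hψ : IsSymmetryAxis p ψ) : φ = ψ := by
  ext x
  by_contra hne
  have step_pos : 0 < ‖(2 * (φ x - ψ x)) • p‖ :=
    norm_pos_iff.2 (smul_ne_zero (mul_ne_zero two_ne_zero (sub_ne_zero.2 hne)) hφ.ne_zero)
  obtain ⟨n, hn⟩ := exists_lt_nsmul step_pos (‖x‖ + ‖x‖)
  refine hn.not_ge ?_
  calc n • ‖(2 * (φ x - ψ x)) • p‖ = ‖x + n • (2 * (φ x - ψ x)) • p - x‖ := by
        rw [add_sub_cancel_left, RCLike.norm_nsmul ℝ, nsmul_eq_mul]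
    _ ≤ ‖x‖ + ‖x‖ := (norm_sub_le _ _).trans (by gcongr; exact hφ.norm_translate_le hψ x n)

lemma exists_tendsto_subseq [FiniteDimensional ℝ E] {q : ℕ → E} {φ : ℕ → E →L[ℝ] ℝ} (hp : p ≠ 0)
    (hq : Tendsto q atTop (𝓝 p)) (h : ∀ n, IsSymmetryAxis (q n) (φ n)) :
    ∃ ψ, IsSymmetryAxis p ψ ∧ ∃ σ : ℕ → ℕ, StrictMono σ ∧ Tendsto (φ ∘ σ) atTop (𝓝 ψ) := by
  have hpn : 0 < ‖p‖ := norm_pos_iff.2 hp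
  have bounded : ∀ᶠ n in atTop, φ n ∈ closedBall (0 : E →L[ℝ] ℝ) (‖p‖ / 2)⁻¹ := by
    filter_upwards [hq.norm.eventually_const_lt (half_lt_self hpn)] with n hn
    refine mem_closedBall_zero_iff.2 (ContinuousLinearMap.opNorm_le_bound _ (by positivity) ?_)
    intro x
    rw [inv_mul_eq_div, le_div_iff₀ (half_pos hpn), Real.norm_eq_abs]
    exact (mul_le_mul_of_nonneg_left hn.le (abs_nonneg _)).trans ((h n).abs_apply_mul_norm_le x)
  obtain ⟨ψ, -, σ, hσ, hψ⟩ :=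
    tendsto_subseq_of_frequently_bounded isBounded_closedBall bounded.frequently
  have hqσ : Tendsto (q ∘ σ) atTop (𝓝 p) := hq.comp hσ.tendsto_atTop
  refine ⟨ψ, ⟨?_, fun x => ?_⟩, σ, hσ, hψ⟩
  · have hψq : Tendsto (fun n => φ (σ n) (q (σ n))) atTop (𝓝 (ψ p)) :=
      (isBoundedBilinearMap_apply.continuous.tendsto (ψ, p)).comp (hψ.prodMk_nhds hqσ)
    exact tendsto_nhds_unique hψq (by simp only [(h _).apply_self, tendsto_const_nhds])
  · have hψx : Tendsto (fun n => φ (σ n) x) atTop (𝓝 (ψ x)) :=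
      Filter.Tendsto.eval_const hψ x
    exact le_of_tendsto' (((hψx.const_mul 2).smul hqσ).sub_const x).norm
      fun n => (h (σ n)).norm_reflect_le x

end IsSymmetryAxis

lemma HasParkablePlaneSections.exists_isSymmetryAxis [FiniteDimensional ℝ E]
    (h : HasParkablePlaneSections (closedBall (0 : E) 1)) (hdim : 3 ≤ finrank ℝ E) (hp : p ≠ 0) :
    ∃ φ, IsSymmetryAxis p φ := by
  have : Nontrivial E := nontrivial_of_ne p 0 hp
  obtain ⟨q, hq, hqp⟩ := mem_closure_iff_seq_limit.1 (dense_differentiableAt_norm (E := E) p)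
  have q_ne_zero (n : ℕ) : q n ≠ 0 := fun hn => not_differentiableAt_norm_zero E (hn ▸ hq n)
  obtain ⟨φ, hφ, -⟩ := IsSymmetryAxis.exists_tendsto_subseq hp hqp
    fun n => h.isSymmetryAxis_fderiv_norm hdim (q_ne_zero n) (hq n)
  exact ⟨φ, hφ⟩

lemma HasParkablePlaneSections.apply_nonneg_of_support [FiniteDimensional ℝ E]
    (h : HasParkablePlaneSections (closedBall (0 : E) 1)) (hdim : 3 ≤ finrank ℝ E)
    (hfp : f p = 1) (hf : ∀ x, f x * ‖p‖ ≤ ‖x‖) (hφ : IsSymmetryAxis p φ) {v : E}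
    (hv : f v = 0) : 0 ≤ φ v := by
  let t (n : ℕ) : ℝ := 1 / (n + 1)
  let q (n : ℕ) : E := p + t n • v
  have hqp : Tendsto q atTop (𝓝 p) := by
    simpa [q, t] using ((tendsto_one_div_add_atTop_nhds_zero_nat (𝕜 := ℝ)).smul_const v).const_add p
  have hfq (n : ℕ) : f (q n) = 1 := by simp [q, hfp, hv]
  have norm_le (n : ℕ) : ‖p‖ ≤ ‖q n‖ := by simpa [hfq] using hf (q n)
  choose ψ hψ using fun n => h.exists_isSymmetryAxis hdim (p := q n)
    (fun hn => by simpa [hn] using hfq n)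
  have apply_nonneg (n : ℕ) : 0 ≤ ψ n v := by
    have hψp : ψ n p ≤ 1 := by
      refine le_of_mul_le_mul_right ?_ (norm_pos_iff.2 (hψ n).ne_zero)
      calc ψ n p * ‖q n‖ ≤ |ψ n p| * ‖q n‖ := by gcongr; exact le_abs_self _
        _ ≤ ‖p‖ := (hψ n).abs_apply_mul_norm_le p
        _ ≤ 1 * ‖q n‖ := (norm_le n).trans_eq (one_mul _).symm
    have hψq : ψ n p + t n * ψ n v = 1 := by simpa [q] using (hψ n).apply_self
    exact nonneg_of_mul_nonneg_right (by linarith) (by positivity : 0 < t n)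
  obtain ⟨χ, hχ, σ, -, hσ⟩ := IsSymmetryAxis.exists_tendsto_subseq hφ.ne_zero hqp hψ
  rw [hφ.unique hχ]
  exact ge_of_tendsto' (Filter.Tendsto.eval_const hσ v) fun n => apply_nonneg (σ n)

lemma HasParkablePlaneSections.isSymmetryAxis_of_support [FiniteDimensional ℝ E]
    (h : HasParkablePlaneSections (closedBall (0 : E) 1)) (hdim : 3 ≤ finrank ℝ E)
    (hfp : f p = 1) (hf : ∀ x, f x * ‖p‖ ≤ ‖x‖) : IsSymmetryAxis p f := by
  obtain ⟨φ, hφ⟩ := h.exists_isSymmetryAxis hdim (p := p) (by rintro rfl; simp at hfp)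
  have apply_eq_zero {v : E} (hv : f v = 0) : φ v = 0 := by
    refine le_antisymm ?_ (h.apply_nonneg_of_support hdim hfp hf hφ hv)
    simpa using h.apply_nonneg_of_support hdim hfp hf hφ (v := -v) (by simpa using hv)
  have hfφ : f = φ := by
    ext x
    have := apply_eq_zero (v := x - f x • p) (by simp [hfp])
    exact (sub_eq_zero.1 (by simpa [hφ.apply_self] using this)).symm
  exact hfφ ▸ hφ

lemma exists_apply_eq_one_and_support [FiniteDimensional ℝ E] (hf : f ≠ 0) :
    ∃ p, f p = 1 ∧ ∀ x, f x * ‖p‖ ≤ ‖x‖ := by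
  obtain ⟨y, hy⟩ := DFunLike.ne_iff.1 hf
  have hy : f y ≠ 0 := hy
  obtain ⟨p, hp, hmin⟩ := (isClosed_singleton.preimage f.continuous).exists_infDist_eq_dist
    (s := f ⁻¹' {1}) ⟨(f y)⁻¹ • y, by simp [hy]⟩ 0
  refine ⟨p, hp, fun x => ?_⟩
  rcases le_or_gt (f x) 0 with hx | hx
  · exact (mul_nonpos_of_nonpos_of_nonneg hx (norm_nonneg p)).trans (norm_nonneg x)
  · have hle : ‖p‖ ≤ ‖(f x)⁻¹ • x‖ := by
      simpa [hmin] using infDist_le_dist_of_mem (x := 0) (s := f ⁻¹' {1}) (y := (f x)⁻¹ • x)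
        (by simp [hx.ne'])
    rwa [norm_smul, norm_inv, Real.norm_of_nonneg hx.le, inv_mul_eq_div, le_div_iff₀ hx,
      mul_comm] at hle

end SymmetryAxis

section ConvexBody

variable {E : Type*} [NormedAddCommGroup E] [NormedSpace ℝ E] {B : Set E}

lemma hasParkablePlaneSections_of_forall_parkable (hclosed : IsClosed B) (hconv : Convex ℝ B)
    (h : ∀ C ⊆ B, C.Nonempty → IsClosed C → Convex ℝ C → Parkable C B) :
    HasParkablePlaneSections B := by
  intro G hG q hq
  have : FiniteDimensional ℝ G := .of_finrank_pos (by lia)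
  refine h _ inter_subset_right ⟨q, mem_affineSection.2 ⟨by simp, hq⟩⟩ ?_ ?_
  · exact ((Homeomorph.addRight q).isClosedMap _ G.closed_of_finiteDimensional).inter hclosed
  · simpa only [affineSection, add_comm _ q] using (G.convex.translate q).inter hconv

variable [FiniteDimensional ℝ E]

lemma HasParkablePlaneSections.exists_reflect_mem (hpark : HasParkablePlaneSections B)
    (hdim : 3 ≤ finrank ℝ E) (hcomp : IsCompact B) (hconv : Convex ℝ B)
    (hint : (interior B).Nonempty) (hsym : B = -B) {f : E →ₗ[ℝ] ℝ} (hf : f ≠ 0) :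
    ∃ p, f p = 1 ∧ ∀ x ∈ B, (2 * f x) • p - x ∈ B := by
  obtain ⟨F, _, _, e, he⟩ := exists_linearEquiv_image_eq_closedBall hcomp hconv
    (mem_interior_iff_mem_nhds.1 (zero_mem_interior_of_eq_neg hconv hsym hint))
    fun x hx => by rw [hsym] at hx; exact hx
  have : FiniteDimensional ℝ F := e.finiteDimensional
  let f' : F →L[ℝ] ℝ := (f ∘ₗ e.symm.toLinearMap).toContinuousLinearMap
  have hf'_apply (x : E) : f' (e x) = f x := by simp [f']
  have hf' : f' ≠ 0 := fun h0 => hf (LinearMap.ext fun x => by rw [← hf'_apply, h0]; rfl)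
  obtain ⟨p, hp, hsupp⟩ := exists_apply_eq_one_and_support hf'
  obtain ⟨p, rfl⟩ := e.surjective p
  have hball := he ▸ hpark.image e
  have haxis := hball.isSymmetryAxis_of_support (e.finrank_eq ▸ hdim) hp hsupp
  refine ⟨p, hf'_apply p ▸ hp, fun x hx => ?_⟩
  rw [← e.injective.mem_set_image, he, mem_closedBall_zero_iff, map_sub, map_smul, ← hf'_apply]
  exact (haxis.norm_reflect_le _).trans
    (mem_closedBall_zero_iff.1 (he ▸ mem_image_of_mem e hx))

theorem stmt_10_general (hdim : 3 ≤ finrank ℝ E) (hcomp : IsCompact B) (hconv : Convex ℝ B)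
    (hint : (interior B).Nonempty) (hsym : B = -B) (hpark : HasParkablePlaneSections B)
    {H : Submodule ℝ E} (hH : finrank ℝ H + 1 = finrank ℝ E) :
    ∃ L : Submodule ℝ E, finrank ℝ L = 1 ∧
      ∀ x, ∃ p ∈ L, IsCenterOfSymmetry p (affineSection B H x) := by
  obtain ⟨f, hf, rfl⟩ := exists_ker_eq_of_finrank_add_one_eq hH
  obtain ⟨p, hfp, hreflect⟩ := hpark.exists_reflect_mem hdim hcomp hconv hint hsym hf
  have hp : p ≠ 0 := by rintro rfl; simp at hfp
  refine ⟨Submodule.span ℝ {p}, finrank_span_singleton hp, fun x => ?_⟩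
  refine ⟨f x • p, Submodule.smul_mem _ _ (Submodule.mem_span_singleton_self p),
    isCenterOfSymmetry_of_mapsTo fun y hy => ?_⟩
  obtain ⟨hyx, hyB⟩ := mem_affineSection.1 hy
  have hfy : f y = f x := by simpa [sub_eq_zero] using hyx
  refine mem_affineSection.2 ⟨?_, ?_⟩
  · simp only [LinearMap.mem_ker, map_sub, map_smul, hfp, hfy, smul_eq_mul]
    ring
  · rw [smul_smul, ← hfy]
    exact hreflect y hyB

end ConvexBody

/-- For a centrally symmetric convex body `B ⊆ ℝⁿ` (n ≥ 3) all of whose closed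
convex subsets are parkable, every family of parallel hyperplane sections of
`B` has centers of symmetry, and these centers lie on a single line through the
origin. -/
theorem stmt_10 (n : ℕ) (hn : 3 ≤ n) (B : Set (EuclideanSpace ℝ (Fin n)))
    (hBcomp : IsCompact B) (hBconv : Convex ℝ B)
    (hBint : (interior B).Nonempty) (hB0 : (0 : EuclideanSpace ℝ (Fin n)) ∈ B)
    (hBsym : B = -B)
    (hpark : ∀ C : Set (EuclideanSpace ℝ (Fin n)),
      C ⊆ B → C.Nonempty → IsClosed C → Convex ℝ C →
      ∃ v : EuclideanSpace ℝ (Fin n),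
        (0 : EuclideanSpace ℝ (Fin n)) ∈ (fun x => x + v) '' C ∧
        (fun x => x + v) '' C ⊆ B) :
    ∀ H : Submodule ℝ (EuclideanSpace ℝ (Fin n)), Module.finrank ℝ H = n - 1 →
      ∃ L : Submodule ℝ (EuclideanSpace ℝ (Fin n)), Module.finrank ℝ L = 1 ∧
        ∀ x : EuclideanSpace ℝ (Fin n),
          (((fun h => h + x) '' (H : Set (EuclideanSpace ℝ (Fin n)))) ∩ B).Nonempty →
          ∃ p ∈ L,
            ((fun h => h + x) '' (H : Set (EuclideanSpace ℝ (Fin n)))) ∩ B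
              = (fun y => (2 : ℝ) • p - y) ''
                  (((fun h => h + x) '' (H : Set (EuclideanSpace ℝ (Fin n)))) ∩ B) := by
  intro H hH
  obtain ⟨L, hL, hcenter⟩ := stmt_10_general (by rwa [finrank_euclideanSpace_fin]) hBcomp hBconv
    hBint hBsym (hasParkablePlaneSections_of_forall_parkable hBcomp.isClosed hBconv hpark)
    (H := H) (by rw [hH, finrank_euclideanSpace_fin]; lia)
  exact ⟨L, hL, fun x _ => hcenter x⟩
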